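/- arXiv:2403.11998 — 6 statements merged into one kernel-verified Lean document; each statement's English description precedes it below -/
import Mathlib

section
/- For every finite nonempty set D of pairwise distinct functions from ℕ to ℕ, there exists a finite set S ⊆ ℕ with |S| ≤ |D| − 1 that separates D; equivalently, the restriction map f ↦ f|_S is injective on D. -/
/-!
If `S` separates `D`, then a further function `f` agrees on `S` with at most one member `g` of `D`.
A single point where `f` and `g` differ, added to `S`, therefore separates `insert f D`. Starting
from a singleton, which `∅` separates, each further function costs at most one point.
-/

section

variable {α : Type*} {β : α → Type*} {S T : Set α} {D : Set (∀ x, β x)} {f : ∀ x, β x}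

/-- `S` separates `D` if any two distinct members of `D` differ at some point of `S`; equivalently,
`S.restrict` is injective on `D`. Here the points separate the functions, whereas in
`Set.SeparatesPoints` the functions separate the points. -/
def Separates (S : Set α) (D : Set (∀ x, β x)) : Prop :=
  D.Pairwise fun f g => ∃ x ∈ S, f x ≠ g x

theorem separates_singleton (S : Set α) (f : ∀ x, β x) : Separates S {f} :=
  Set.pairwise_singleton f _

theorem separates_insert :
    Separates S (insert f D) ↔ Separates S D ∧ ∀ g ∈ D, f ≠ g → ∃ x ∈ S, f x ≠ g x :=
  have : Std.Symm fun f g : ∀ x, β x => ∃ x ∈ S, f x ≠ g x :=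
    ⟨fun _ _ ⟨x, hx, hne⟩ => ⟨x, hx, hne.symm⟩⟩
  Set.pairwise_insert_of_symm

theorem Separates.mono (hST : S ⊆ T) (hS : Separates S D) : Separates T D :=
  Set.Pairwise.mono' (fun _ _ ⟨x, hx, hne⟩ => ⟨x, hST hx, hne⟩) hS

theorem Separates.subsingleton_setOf_forall_eq (hS : Separates S D) (f : ∀ x, β x) :
    {g ∈ D | ∀ x ∈ S, f x = g x}.Subsingleton := by
  rintro g ⟨hg, hfg⟩ h ⟨hh, hfh⟩
  by_contra hgh
  obtain ⟨x, hx, hne⟩ := hS hg hh hgh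
  exact hne ((hfg x hx).symm.trans (hfh x hx))

theorem Separates.exists_insert_insert (hS : Separates S D) (hD : D.Nonempty) (hf : f ∉ D) :
    ∃ x, Separates (insert x S) (insert f D) := by
  obtain ⟨g, hg, h_unique⟩ : ∃ g ∈ D, ∀ h ∈ D, (∀ x ∈ S, f x = h x) → h = g := by
    obtain h_empty | ⟨g, hg⟩ := {g ∈ D | ∀ x ∈ S, f x = g x}.eq_empty_or_nonempty
    · obtain ⟨g, hg⟩ := hD
      exact ⟨g, hg, fun h hh hfh => (h_empty.subset ⟨hh, hfh⟩).elim⟩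
    · exact ⟨g, hg.1, fun h hh hfh => hS.subsingleton_setOf_forall_eq f ⟨hh, hfh⟩ hg⟩
  obtain ⟨y, hy⟩ : ∃ y, f y ≠ g y := Function.ne_iff.mp (ne_of_mem_of_not_mem hg hf).symm
  refine ⟨y, separates_insert.mpr ⟨hS.mono (Set.subset_insert y S), fun h hh _ => ?_⟩⟩
  obtain rfl | hne := eq_or_ne h g
  · exact ⟨y, Set.mem_insert y S, hy⟩
  · obtain ⟨x, hx, hfx⟩ : ∃ x ∈ S, f x ≠ h x := by
      by_contra! hfh
      exact hne (h_unique h hh hfh)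
    exact ⟨x, Set.mem_insert_of_mem y hx, hfx⟩

theorem exists_small_separating_set_general (D : Finset (∀ x, β x)) (hD : D.Nonempty) :
    ∃ S : Finset α, S.card < D.card ∧ Separates (S : Set α) (D : Set (∀ x, β x)) := by
  classical
  induction hD using Finset.Nonempty.cons_induction with
  | singleton f => exact ⟨∅, by simp, by simpa using separates_singleton ∅ f⟩
  | cons f D hf hD ih =>
    obtain ⟨S, hcard, hS⟩ := ih
    obtain ⟨x, hx⟩ := hS.exists_insert_insert hD hf
    refine ⟨insert x S, ?_, by simpa using hx⟩
    calc (insert x S).card ≤ S.card + 1 := Finset.card_insert_le x S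
      _ < D.card + 1 := Nat.succ_lt_succ hcard
      _ = (D.cons f hf).card := (Finset.card_cons hf).symm

end

/-- For every finite nonempty set `D` of pairwise distinct functions
`ℕ → ℕ`, there exists a finite set `S ⊆ ℕ` with `|S| ≤ |D| - 1` that separates `D`,
i.e. for any two distinct `f, g ∈ D` there is `x ∈ S` with `f x ≠ g x`
(equivalently, the restriction map `f ↦ f|_S` is injective on `D`). -/
theorem exists_small_separating_set (D : Finset (ℕ → ℕ)) (hD : D.Nonempty) :
    ∃ S : Finset ℕ, S.card ≤ D.card - 1 ∧
      ∀ f ∈ D, ∀ g ∈ D, f ≠ g → ∃ x ∈ S, f x ≠ g x := by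
  obtain ⟨S, hcard, hS⟩ := exists_small_separating_set_general D hD
  exact ⟨S, Nat.le_sub_one_of_lt hcard, fun f hf g hg => hS hf hg⟩
end

section
/- For every finite nonempty set D of pairwise distinct functions from ℕ to ℕ, there exists an adaptive strategy that identifies the members of D in at most |D| − 1 interactions; moreover the strategy can be chosen non-interactive, i.e., its probing inputs do not depend on the answers received. -/
/-- The answer trace produced by interacting with `f : ℕ → ℕ` using the adaptive
strategy `q : List ℕ → ℕ` (mapping the answers received so far to the next probing
input): `trace q f 0 = []` and `trace q f (j+1) = trace q f j ++ [f (q (trace q f j))]`. -/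
def trace (q : List ℕ → ℕ) (f : ℕ → ℕ) : ℕ → List ℕ
  | 0 => []
  | j + 1 => trace q f j ++ [f (q (trace q f j))]

/-!
Induction on `D` gives fewer than `|D|` inputs whose values separate the members of `D`: a new
function `a` is confused on the inputs found so far with at most one member of `D`, because these
inputs already separate `D`, and a single further input tells `a` apart from that member. Probing
the separating inputs in increasing order, whatever the answers, identifies `D`.
-/

section Separation

variable {ι : Type*} {π : ι → Type*}

lemma injOn_restrict_mono {S T : Finset ι} {D : Set (∀ i, π i)} (hST : S ⊆ T)
    (hS : D.InjOn S.restrict) : D.InjOn T.restrict :=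
  Set.InjOn.of_comp (g := Finset.restrict₂ hST) hS

lemma exists_superset_restrict_notMem_image {S : Finset ι} {D : Set (∀ i, π i)} {a : ∀ i, π i}
    (hS : D.InjOn S.restrict) (ha : a ∉ D) :
    ∃ T, S ⊆ T ∧ T.card ≤ S.card + 1 ∧ T.restrict a ∉ T.restrict '' D := by
  classical
  by_cases hmem : S.restrict a ∈ S.restrict '' D
  · obtain ⟨f, hf, hfa⟩ := hmem
    obtain ⟨x, hx⟩ : ∃ x, f x ≠ a x := Function.ne_iff.mp (ne_of_mem_of_not_mem hf ha)
    refine ⟨insert x S, Finset.subset_insert x S, Finset.card_insert_le x S, ?_⟩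
    rintro ⟨g, hg, hga⟩
    have hgS : S.restrict g = S.restrict a :=
      congrArg (Finset.restrict₂ (Finset.subset_insert x S)) hga
    have hgf : g = f := hS hg hf (hgS.trans hfa.symm)
    have hgx : g x = a x := congrFun hga ⟨x, Finset.mem_insert_self x S⟩
    exact hx (hgf ▸ hgx)
  · exact ⟨S, Finset.Subset.rfl, Nat.le_succ _, hmem⟩

theorem exists_card_lt_injOn_restrict {D : Finset (∀ i, π i)} (hD : D.Nonempty) :
    ∃ S : Finset ι, S.card < D.card ∧ (D : Set (∀ i, π i)).InjOn S.restrict := by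
  induction hD using Finset.Nonempty.cons_induction with
  | singleton a => exact ⟨∅, by simp, by simp⟩
  | cons a D ha _ ih =>
    obtain ⟨S, hcard, hS⟩ := ih
    obtain ⟨T, hST, hTcard, haT⟩ :=
      exists_superset_restrict_notMem_image hS (Finset.mem_coe.not.mpr ha)
    refine ⟨T, ?_, ?_⟩
    · rw [Finset.card_cons]
      omega
    · rw [Finset.coe_cons, Set.injOn_insert (Finset.mem_coe.not.mpr ha)]
      exact ⟨injOn_restrict_mono hST hS, haT⟩

end Separation

lemma trace_eq_map_range (xs f : ℕ → ℕ) (m : ℕ) :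
    trace (fun l => xs l.length) f m = (List.range m).map (f ∘ xs) := by
  induction m with
  | zero => rfl
  | succ m ih => simp [trace, ih, List.range_succ]

lemma trace_eq_trace_iff (xs f g : ℕ → ℕ) (m : ℕ) :
    trace (fun l => xs l.length) f m = trace (fun l => xs l.length) g m ↔
      (xs '' Set.Iio m).EqOn f g := by
  rw [← Set.eqOn_comp_right_iff]
  simp only [trace_eq_map_range, List.map_inj_left, List.mem_range, Set.EqOn, Set.mem_Iio]

lemma image_nth_mem_Iio_card (S : Finset ℕ) : Nat.nth (· ∈ S) '' Set.Iio S.card = S := by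
  have himage := Nat.image_nth_Iio_card (p := (· ∈ S)) S.finite_toSet
  rwa [Finset.finite_toSet_toFinset] at himage

/-- For every finite nonempty set `D` of pairwise distinct functions
`ℕ → ℕ`, there exists an adaptive strategy identifying the members of `D` in at most
`|D| - 1` interactions (the trace map `f ↦ T_f(m)` is injective on `D`); moreover the
strategy can be chosen non-interactive: its probing inputs depend only on how many
answers have been received, not on the answers themselves. -/
theorem exists_noninteractive_identifying_strategy (D : Finset (ℕ → ℕ)) (hD : D.Nonempty) :
    ∃ (q : List ℕ → ℕ) (xs : ℕ → ℕ) (m : ℕ), m ≤ D.card - 1 ∧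
      (∀ l : List ℕ, q l = xs l.length) ∧
      Set.InjOn (fun f => trace q f m) (D : Set (ℕ → ℕ)) := by
  obtain ⟨S, hcard, hS⟩ := exists_card_lt_injOn_restrict hD
  let xs : ℕ → ℕ := Nat.nth (· ∈ S)
  refine ⟨fun l => xs l.length, xs, S.card, Nat.le_sub_one_of_lt hcard, fun _ => rfl, ?_⟩
  intro f hf g hg htrace
  have hfg : Set.EqOn f g S := by
    rw [← image_nth_mem_Iio_card S]
    exact (trace_eq_trace_iff xs f g S.card).mp htrace
  exact hS hf hg (funext fun x => hfg x.2)
end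

section
/- For every integer L ≥ 2 and every adaptive strategy, if the strategy identifies the members of the family {ξ_1, …, ξ_L} in m interactions, then m ≥ L − 1; that is, even interactive interrogators need at least L − 1 probing interactions in the worst case for this family. -/
/-- `ξ_i : ℕ → ℕ` with `ξ_i n = 0` if `n = i` and `ξ_i n = n` otherwise. -/
def xi (i : ℕ) : ℕ → ℕ := fun n => if n = i then 0 else n

/-!
Run the strategy against a reference function `f`, here the identity, and let `Q` be the set of at
most `m` inputs it probes. A function agreeing with `f` on `Q` receives the same queries and gives
the same answers, so at most one member of an identified family agrees with `f` on `Q`. If no input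
is a point of disagreement with `f` for two members, then `Q` exposes at most `m` of the others.
-/

section Trace

variable (q : List ℕ → ℕ) (f : ℕ → ℕ) (m : ℕ)

/-- The inputs probed by the strategy `q` in its first `m` interactions with `f`. -/
def queries : Finset ℕ :=
  (Finset.range m).image fun j => q (trace q f j)

theorem card_queries_le : (queries q f m).card ≤ m :=
  Finset.card_image_le.trans_eq (Finset.card_range m)

theorem queries_succ : queries q f (m + 1) = insert (q (trace q f m)) (queries q f m) := by
  simp only [queries, Finset.range_add_one, Finset.image_insert]

variable {q f m}

theorem trace_eq_of_eqOn_queries {g : ℕ → ℕ} (h : Set.EqOn g f (queries q f m)) :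
    trace q g m = trace q f m := by
  induction m with
  | zero => rfl
  | succ m ih =>
    simp only [queries_succ, Finset.coe_insert, Set.EqOn, Set.forall_mem_insert] at h
    simp only [trace, ih h.2, h.1]

end Trace

theorem encard_le_encard_of_pairwiseDisjoint_of_inter_nonempty {ι α : Type*} {s : Set ι}
    {A : ι → Set α} {Q : Set α} (hA : s.PairwiseDisjoint A) (hQ : ∀ i ∈ s, (A i ∩ Q).Nonempty) :
    s.encard ≤ Q.encard := by
  choose p hpA hpQ using hQ
  let e : s → Q := fun i => ⟨p i i.2, hpQ i i.2⟩
  have he : Function.Injective e := fun i j hij =>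
    have hp : p i i.2 = p j j.2 := congrArg Subtype.val hij
    Subtype.ext <| hA.elim_set i.2 j.2 (p i i.2) (hpA i i.2) (hp ▸ hpA j j.2)
  exact Function.Embedding.encard_le ⟨e, he⟩

theorem interactive_lower_bound_general {ι : Type*} {F : ι → ℕ → ℕ} {f : ℕ → ℕ} {s : Set ι}
    (hF : s.PairwiseDisjoint fun i => {n | F i n ≠ f n}) {q : List ℕ → ℕ} {m : ℕ}
    (hid : Set.InjOn (fun i => trace q (F i) m) s) : s.encard ≤ m + 1 := by
  let Q : Set ℕ := queries q f m
  let t : Set ι := {i | Set.EqOn (F i) f Q}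
  have exposed (i : ι) (hi : i ∈ s \ t) : ({n | F i n ≠ f n} ∩ Q).Nonempty := by
    obtain ⟨n, hnQ, hn⟩ : ∃ n ∈ Q, F i n ≠ f n := by
      simpa only [t, Set.EqOn, Set.mem_ofPred_eq, not_forall, exists_prop] using hi.2
    exact ⟨n, hn, hnQ⟩
  have exposed_le : (s \ t).encard ≤ m := calc
    (s \ t).encard ≤ Q.encard :=
      encard_le_encard_of_pairwiseDisjoint_of_inter_nonempty (hF.subset Set.sdiff_subset) exposed
    _ = (queries q f m).card := Set.encard_coe_eq_coe_finsetCard _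
    _ ≤ m := mod_cast card_queries_le q f m
  have unexposed_le : (s ∩ t).encard ≤ 1 :=
    Set.encard_le_one_iff_subsingleton.2 fun i hi j hj => hid hi.1 hj.1 <|
      (trace_eq_of_eqOn_queries hi.2).trans (trace_eq_of_eqOn_queries hj.2).symm
  calc
    s.encard = (s \ t).encard + (s ∩ t).encard := (Set.encard_sdiff_add_encard_inter s t).symm
    _ ≤ m + 1 := add_le_add exposed_le unexposed_le

theorem xi_self (i : ℕ) : xi i i = 0 := if_pos rfl

theorem xi_of_ne {i n : ℕ} (h : n ≠ i) : xi i n = n := if_neg h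

theorem xi_injective : Function.Injective xi := by
  intro i j hij
  by_contra hne
  have hi : i = 0 := by rw [← xi_of_ne hne, ← hij, xi_self]
  have hj : j = 0 := by rw [← xi_of_ne (Ne.symm hne), hij, xi_self]
  exact hne (hi.trans hj.symm)

theorem pairwiseDisjoint_xi_ne_id (s : Set ℕ) :
    s.PairwiseDisjoint fun i => {n | xi i n ≠ id n} := by
  intro i _ j _ hij
  refine Set.disjoint_left.2 fun n hi hj => hij ?_
  exact (not_imp_comm.1 xi_of_ne hi).symm.trans (not_imp_comm.1 xi_of_ne hj)

/-- For every integer `L ≥ 2` and every adaptive strategy `q`, if the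
strategy identifies the members of the family `{ξ_1, …, ξ_L}` in `m` interactions
(i.e. `f ↦ T_f(m)` is injective on this family), then `m ≥ L - 1`. -/
theorem interactive_lower_bound (L : ℕ) (hL : 2 ≤ L) (q : List ℕ → ℕ) (m : ℕ)
    (hid : Set.InjOn (fun f => trace q f m) (xi '' Set.Icc 1 L)) :
    L - 1 ≤ m := by
  have encard_le : (Set.Icc 1 L).encard ≤ m + 1 := interactive_lower_bound_general
    (pairwiseDisjoint_xi_ne_id _) (hid.comp xi_injective.injOn (Set.mapsTo_image _ _))
  rw [← Finset.coe_Icc, Set.encard_coe_eq_coe_finsetCard, Nat.card_Icc,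
    Nat.add_sub_cancel] at encard_le
  exact Nat.sub_le_of_le_add (mod_cast encard_le)
end

section
/- For every integer n ≥ 2, there exists a set D of n pairwise distinct functions from ℕ to ℕ such that every adaptive strategy that identifies the members of D requires at least n − 1 interactions; combined with the upper bound of |D| − 1 interactions, this shows the worst-case number of probing interactions needed to identify a function from a set D is exactly |D| − 1 for both interactive and non-interactive interrogators. -/
/-!
Lower bound: take the indicators of the points of `{0, …, n - 1}`. As long as a strategy does not
probe `i`, the indicator of `i` answers exactly like the zero function. So at most one of the `n`
points escapes the `m` inputs probed against the zero function, and `n ≤ m + 1`.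

Upper bound: any `n` distinct functions are already distinct on some `n - 1` points. Adding a
function to a family separated by a set of points costs at most one more point, because the new
function can agree there with at most one old one. Probing these points in a fixed order is a
non-interactive strategy.
-/

theorem length_trace (q : List ℕ → ℕ) (f : ℕ → ℕ) (m : ℕ) : (trace q f m).length = m := by
  induction m with
  | zero => rfl
  | succ m ih => rw [trace, List.length_append, ih, List.length_singleton]

/-- The set of inputs on which the strategy `q` probes `f` during the first `m` interactions. -/
def probes (q : List ℕ → ℕ) (f : ℕ → ℕ) (m : ℕ) : Finset ℕ :=
  (Finset.range m).image fun j => q (trace q f j)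

theorem card_probes_le (q : List ℕ → ℕ) (f : ℕ → ℕ) (m : ℕ) : (probes q f m).card ≤ m :=
  Finset.card_image_le.trans_eq (Finset.card_range m)

theorem probes_succ (q : List ℕ → ℕ) (f : ℕ → ℕ) (m : ℕ) :
    probes q f (m + 1) = insert (q (trace q f m)) (probes q f m) := by
  rw [probes, Finset.range_add_one, Finset.image_insert, probes]

theorem probes_comp_length (xs : ℕ → ℕ) (f : ℕ → ℕ) (m : ℕ) :
    probes (fun l => xs l.length) f m = (Finset.range m).image xs := by
  simp only [probes, length_trace]

theorem trace_eq_trace_iff_s5 {q : List ℕ → ℕ} {f g : ℕ → ℕ} {m : ℕ} :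
    trace q f m = trace q g m ↔ Set.EqOn f g (probes q g m) := by
  induction m with
  | zero => simp [trace, probes]
  | succ m ih =>
    rw [trace, trace, ← List.concat_eq_append, ← List.concat_eq_append, List.concat_inj,
      probes_succ, Finset.coe_insert, Set.insert_eq, Set.eqOn_union, Set.eqOn_singleton,
      ← ih, and_comm]
    exact and_congr_left fun h => by rw [h]

theorem card_le_add_one_of_injOn_trace_update {q : List ℕ → ℕ} {g v : ℕ → ℕ} {m : ℕ}
    {S : Finset ℕ} (hS : Set.InjOn (fun i => trace q (Function.update g i (v i)) m) S) :
    S.card ≤ m + 1 := by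
  have trace_eq : ∀ i ∉ probes q g m, trace q (Function.update g i (v i)) m = trace q g m :=
    fun i hi => trace_eq_trace_iff_s5.2 fun x hx =>
      Function.update_of_ne (ne_of_mem_of_not_mem hx hi) _ _
  have unprobed : (S \ probes q g m).card ≤ 1 := by
    refine Finset.card_le_one.2 fun i hi j hj => ?_
    rw [Finset.mem_sdiff] at hi hj
    exact hS hi.1 hj.1 ((trace_eq i hi.2).trans (trace_eq j hj.2).symm)
  calc S.card ≤ (S \ probes q g m).card + (probes q g m).card :=
        Finset.card_le_card_sdiff_add_card
    _ ≤ 1 + m := add_le_add unprobed (card_probes_le q g m)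
    _ = m + 1 := add_comm 1 m

theorem injOn_domRestrict_mono {α β : Type*} {s t : Set α} (hst : s ⊆ t)
    {D : Set (α → β)} (hs : D.InjOn s.domRestrict) : D.InjOn t.domRestrict :=
  fun _ hf _ hg h => hs hf hg <|
    Set.domRestrict_eq_domRestrict_iff.2 ((Set.domRestrict_eq_domRestrict_iff.1 h).mono hst)

/-- Bondy's theorem on induced subsets, for arbitrary functions instead of indicators. -/
theorem exists_card_le_injOn_domRestrict {α β : Type*} (D : Finset (α → β)) :
    ∃ s : Finset α, s.card ≤ D.card - 1 ∧ Set.InjOn (s : Set α).domRestrict (D : Set (α → β)) := by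
  classical
  induction D using Finset.induction_on with
  | empty => exact ⟨∅, by simp⟩
  | insert f D hf ih =>
    obtain ⟨s, hs, hinj⟩ := ih
    rw [Finset.card_insert_of_notMem hf, Nat.add_sub_cancel, Finset.coe_insert]
    simp only [Set.injOn_insert (Finset.mem_coe.not.2 hf), Set.mem_image, Finset.mem_coe,
      Set.domRestrict_eq_domRestrict_iff]
    by_cases hclash : ∃ g ∈ D, Set.EqOn g f s
    · obtain ⟨g, hg, hgf⟩ := hclash
      obtain ⟨x, hx⟩ := Function.ne_iff.1 (ne_of_mem_of_not_mem hg hf)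
      have hcard : (insert x s).card ≤ D.card := by
        have hsucc := Finset.card_insert_le x s
        have hpos := Finset.card_pos.2 ⟨g, hg⟩
        omega
      have hsub : s ⊆ insert x s := Finset.subset_insert x s
      refine ⟨insert x s, hcard, injOn_domRestrict_mono hsub hinj, ?_⟩
      rintro ⟨h, hh, hhf⟩
      have hhg : h = g := hinj hh hg <|
        Set.domRestrict_eq_domRestrict_iff.2 ((hhf.mono hsub).trans hgf.symm)
      exact hx (hhg ▸ hhf (Finset.mem_insert_self x s))
    · exact ⟨s, hs.trans (Nat.sub_le _ _), hinj, hclash⟩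

theorem exists_image_range_card_eq (s : Finset ℕ) :
    ∃ xs : ℕ → ℕ, (Finset.range s.card).image xs = s := by
  refine ⟨Nat.nth (· ∈ s), Finset.coe_injective ?_⟩
  simpa using Nat.image_nth_Iio_card (p := (· ∈ s)) s.finite_toSet

theorem exists_injOn_trace_comp_length (D : Finset (ℕ → ℕ)) :
    ∃ xs : ℕ → ℕ, Set.InjOn (fun f => trace (fun l => xs l.length) f (D.card - 1))
      (D : Set (ℕ → ℕ)) := by
  obtain ⟨s, hcard, hs⟩ := exists_card_le_injOn_domRestrict D
  obtain ⟨xs, hxs⟩ := exists_image_range_card_eq s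
  have hsub : s ⊆ (Finset.range (D.card - 1)).image xs :=
    hxs.symm.trans_subset (Finset.image_subset_image (Finset.range_mono hcard))
  refine ⟨xs, fun f hf g hg hfg => ?_⟩
  rw [trace_eq_trace_iff_s5, probes_comp_length] at hfg
  exact hs hf hg (Set.domRestrict_eq_domRestrict_iff.2 (hfg.mono (Finset.coe_subset.2 hsub)))

/-- For every integer `n ≥ 2` there exists a set `D` of `n` pairwise
distinct functions `ℕ → ℕ` such that every adaptive strategy identifying the members
of `D` requires at least `n - 1` interactions; moreover (the matching upper bound)
some non-interactive strategy identifies the members of `D` in `n - 1` interactions,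
so the worst-case number of probing interactions is exactly `|D| - 1` for both
interactive and non-interactive interrogators. -/
theorem worst_case_interactions (n : ℕ) (hn : 2 ≤ n) :
    ∃ D : Finset (ℕ → ℕ), D.card = n ∧
      (∀ (q : List ℕ → ℕ) (m : ℕ),
        Set.InjOn (fun f => trace q f m) (D : Set (ℕ → ℕ)) → n - 1 ≤ m) ∧
      (∃ (q : List ℕ → ℕ) (xs : ℕ → ℕ),
        (∀ l : List ℕ, q l = xs l.length) ∧
        Set.InjOn (fun f => trace q f (n - 1)) (D : Set (ℕ → ℕ))) := by
  have hsingle : Function.Injective fun i : ℕ => (Pi.single i 1 : ℕ → ℕ) := by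
    intro i j hij
    simpa [Pi.single_apply] using congrFun hij i
  let D : Finset (ℕ → ℕ) := (Finset.range n).map ⟨fun i => Pi.single i 1, hsingle⟩
  have hD : D.card = n := by rw [Finset.card_map, Finset.card_range]
  refine ⟨D, hD, fun q m hq => ?_, ?_⟩
  · have htrace : Set.InjOn (fun i => trace q (Pi.single i 1) m) (Finset.range n : Set ℕ) :=
      hq.comp hsingle.injOn fun i hi => Finset.mem_map_of_mem _ hi
    have hle : (Finset.range n).card ≤ m + 1 := card_le_add_one_of_injOn_trace_update htrace
    rwa [Finset.card_range, ← Nat.sub_le_iff_le_add] at hle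
  · obtain ⟨xs, hxs⟩ := exists_injOn_trace_comp_length D
    exact ⟨_, xs, fun _ => rfl, hD ▸ hxs⟩
end

section
/- The map m ↦ g_m is injective on the parameter set {1, …, M}^{k−1}: if g_m = g_{m'} as functions List (Fin k) → Finset (Fin k), then m = m'. In particular the function set D_L contains exactly M^{k−1} pairwise distinct members. -/
/-- The word `a_1^n a_2^{n + m_2} ⋯ a_k^{n + m_k}` over the alphabet `Fin k`
(where, for a valid parameter tuple, `m` vanishes on the first token). -/
def word (k : ℕ) (m : Fin k → ℕ) (n : ℕ) : List (Fin k) :=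
  (List.finRange k).flatMap fun i => List.replicate (n + m i) i

/-- A valid parameter tuple `(m_2, …, m_k)`: the entry of the first token is `0`
and every other entry lies in `{1, …, M}`. -/
def validParam (k M : ℕ) (m : Fin k → ℕ) : Prop :=
  (∀ i : Fin k, (i : ℕ) = 0 → m i = 0) ∧
  (∀ i : Fin k, 1 ≤ (i : ℕ) → 1 ≤ m i ∧ m i ≤ M)

/-- The language `L_m = { a_1^n a_2^{n+m_2} ⋯ a_k^{n+m_k} | n ≥ 1 }`. -/
def lang (k : ℕ) (m : Fin k → ℕ) : Set (List (Fin k)) :=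
  {w | ∃ n, 1 ≤ n ∧ w = word k m n}

/-- The generative function `g_m`, mapping a string `s` to the set of tokens `t`
such that `s ++ [t]` is a prefix of some word of `L_m` (so `g_m s = ∅` when `s`
admits no valid continuation). -/
noncomputable def gen (k : ℕ) (m : Fin k → ℕ) (s : List (Fin k)) : Finset (Fin k) :=
  @Finset.filter _ (fun t => ∃ n, 1 ≤ n ∧ (s ++ [t]) <+: word k m n)
    (Classical.decPred _) Finset.univ

/-!
Suppose `g_m = g_{m'}`. Then the shortest word of `L_m` is a prefix of the `n'`-th word of `L_{m'}`,
and the shortest word of `L_{m'}` is a prefix of the `n`-th word of `L_m`. Words are sorted, so a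
prefix in which `a_2` occurs already contains every `a_1`. Writing `m_1` for the entry of `m` at the
first token, which need not vanish here, this gives `1 + m_1 = n' + m'_1` and
`1 + m'_1 = n + m_1`, so `n = n' = 1`. The two shortest words are thus prefixes of each other, hence
equal, and their letter counts give back `m = m'`.
-/

theorem count_eq_of_isPrefix_of_sortedLE {α : Type*} [Preorder α] [DecidableEq α] {l w : List α}
    {a b : α} (hw : w.SortedLE) (hl : l <+: w) (hb : b ∈ l) (hab : a < b) :
    l.count a = w.count a := by
  obtain ⟨t, rfl⟩ := hl
  have ha : a ∉ t := fun ha =>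
    ((List.pairwise_append.1 hw.pairwise).2.2 b hb a ha).not_gt hab
  rw [List.count_append, List.count_eq_zero_of_not_mem ha, Nat.add_zero]

section Word

variable {k n n' : ℕ} {m m' : Fin k → ℕ}

theorem count_word (k : ℕ) (m : Fin k → ℕ) (n : ℕ) (i : Fin k) :
    (word k m n).count i = n + m i := by
  calc
    (word k m n).count i = ∑ j, (List.replicate (n + m j) j).count i := by
      rw [word, List.count_flatMap, ← List.ofFn_eq_map, List.sum_ofFn]
      rfl
    _ = n + m i := by simp [List.count_replicate]

theorem word_injective (k n : ℕ) : Function.Injective fun m => word k m n := by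
  intro m m' h
  funext i
  have hcount := congrArg (List.count i) h
  simpa only [count_word, Nat.add_left_cancel_iff] using hcount

theorem mem_word (hn : 1 ≤ n) (m : Fin k → ℕ) (i : Fin k) : i ∈ word k m n := by
  rw [← List.count_pos_iff, count_word]
  lia

theorem sortedLE_word (k : ℕ) (m : Fin k → ℕ) (n : ℕ) : (word k m n).SortedLE := by
  refine List.Pairwise.sortedLE (List.pairwise_flatMap.2 ⟨fun i _ => ?_, ?_⟩)
  · exact List.pairwise_replicate.2 (.inr le_rfl)
  · refine (List.pairwise_lt_finRange k).imp fun hij x hx y hy => ?_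
    rw [List.eq_of_mem_replicate hx, List.eq_of_mem_replicate hy]
    exact hij.le

theorem add_eq_add_of_word_isPrefix (hn : 1 ≤ n) (h : word k m n <+: word k m' n') {i j : Fin k}
    (hij : i < j) : n + m i = n' + m' i := by
  simpa only [count_word] using
    count_eq_of_isPrefix_of_sortedLE (sortedLE_word k m' n') h (mem_word hn m j) hij

end Word

section Gen

variable {k : ℕ} {m m' : Fin k → ℕ}

theorem word_mem_lang {n : ℕ} (hn : 1 ≤ n) (m : Fin k → ℕ) : word k m n ∈ lang k m :=
  ⟨n, hn, rfl⟩

theorem mem_gen_iff {s : List (Fin k)} {t : Fin k} :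
    t ∈ gen k m s ↔ ∃ w ∈ lang k m, s ++ [t] <+: w := by
  simp [gen, lang]

theorem exists_isPrefix_mem_lang_iff_of_gen_eq (h : gen k m = gen k m') (s : List (Fin k)) :
    (∃ w ∈ lang k m, s <+: w) ↔ ∃ w ∈ lang k m', s <+: w := by
  rcases s.eq_nil_or_concat' with rfl | ⟨s, t, rfl⟩
  · exact iff_of_true ⟨_, word_mem_lang le_rfl m, List.nil_prefix⟩
      ⟨_, word_mem_lang le_rfl m', List.nil_prefix⟩
  · rw [← mem_gen_iff, ← mem_gen_iff, h]

theorem exists_word_isPrefix_of_gen_eq (h : gen k m = gen k m') {n : ℕ} (hn : 1 ≤ n) :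
    ∃ n', 1 ≤ n' ∧ word k m n <+: word k m' n' := by
  obtain ⟨_, ⟨n', hn', rfl⟩, hp⟩ := (exists_isPrefix_mem_lang_iff_of_gen_eq h _).1
    ⟨_, word_mem_lang hn m, List.prefix_rfl⟩
  exact ⟨n', hn', hp⟩

end Gen

theorem gen_injective_general {k : ℕ} (hk : 2 ≤ k) : Function.Injective (gen k) := by
  intro m m' h
  obtain ⟨n', hn', hp⟩ := exists_word_isPrefix_of_gen_eq h le_rfl
  obtain ⟨n, hn, hp'⟩ := exists_word_isPrefix_of_gen_eq h.symm le_rfl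
  have h01 : (⟨0, by lia⟩ : Fin k) < ⟨1, hk⟩ := Nat.zero_lt_one
  have hcount := add_eq_add_of_word_isPrefix le_rfl hp h01
  have hcount' := add_eq_add_of_word_isPrefix le_rfl hp' h01
  obtain ⟨rfl, rfl⟩ : n = 1 ∧ n' = 1 := by lia
  exact word_injective k 1 (hp.sublist.antisymm hp'.sublist)

theorem setOf_validParam_succ (k M : ℕ) :
    {m | validParam (k + 1) M m} =
      ↑(Fintype.piFinset (Fin.cons {0} fun _ => Finset.Icc 1 M : Fin (k + 1) → Finset ℕ)) := by
  ext m
  simp [validParam, Fin.forall_fin_succ]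

theorem ncard_validParam_succ (k M : ℕ) : {m | validParam (k + 1) M m}.ncard = M ^ k := by
  rw [setOf_validParam_succ, Set.ncard_coe_finset, Fintype.card_piFinset, Fin.prod_univ_succ]
  simp

/-- The map `m ↦ g_m` is injective on the parameter set
`{1, …, M}^{k-1}`: if `g_m = g_{m'}` as functions then `m = m'`. In particular the
function set `D_L = { g_m }` contains exactly `M^(k-1)` pairwise distinct members. -/
theorem gen_injective (k M : ℕ) (hk : 3 ≤ k) (hM : 1 ≤ M) :
    Set.InjOn (gen k) {m | validParam k M m} ∧
    (gen k '' {m | validParam k M m}).ncard = M ^ (k - 1) := by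
  have hinj : Function.Injective (gen k) := gen_injective_general (by lia)
  obtain ⟨k, rfl⟩ : ∃ j, k = j + 1 := ⟨k - 1, by lia⟩
  refine ⟨hinj.injOn, ?_⟩
  rw [Set.ncard_image_of_injective _ hinj, ncard_validParam_succ, Nat.add_sub_cancel]
end

section
/- If a string p ∈ List (Fin k) has [a_1, a_2] as a prefix and p is a prefix of some word of L_m, then p is a prefix of the n = 1 word s_m. Consequently, for every such p the set of allowed continuations g_m(p) contains at most one token, and g_m(p) = ∅ if and only if p = s_m. -/
theorem replicate_prefix_word (k : ℕ) [NeZero k] (m : Fin k → ℕ) (n : ℕ) :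
    List.replicate (n + m 0) 0 <+: word k m n := by
  obtain ⟨j, rfl⟩ := Nat.exists_eq_succ_of_ne_zero (NeZero.ne k)
  rw [word, List.finRange_succ, List.flatMap_cons]
  exact List.prefix_append _ _

section

variable {k : ℕ} {m : Fin k → ℕ} {p : List (Fin k)}

theorem eq_of_pair_prefix_word {n : ℕ} {a b : Fin k} (hn : 2 ≤ n)
    (h : [a, b] <+: word k m n) : a = b := by
  have : NeZero k := a.neZero
  have hpair : [a, b] <+: List.replicate (n + m 0) 0 :=
    List.prefix_of_prefix_length_le h (replicate_prefix_word k m n)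
      (by simpa using hn.trans (Nat.le_add_right n (m 0)))
  have hzero : ∀ c ∈ [a, b], c = 0 := fun c hc => List.eq_of_mem_replicate (hpair.subset hc)
  rw [hzero a (by simp), hzero b (by simp)]

theorem mem_gen {t : Fin k} :
    t ∈ gen k m p ↔ ∃ n, 1 ≤ n ∧ p ++ [t] <+: word k m n := by
  simp [gen]

theorem gen_eq_toFinset_head? {r : List (Fin k)} {N : ℕ} (hN : 1 ≤ N)
    (hunique : ∀ n, 1 ≤ n → p <+: word k m n → n = N) (hr : p ++ r = word k m N) :
    gen k m p = r.head?.toFinset := by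
  ext t
  calc
    t ∈ gen k m p ↔ p ++ [t] <+: word k m N := by
      rw [mem_gen]
      refine ⟨?_, fun h => ⟨N, hN, h⟩⟩
      rintro ⟨n, hn, h⟩
      rwa [← hunique n hn ((List.prefix_append p [t]).trans h)]
    _ ↔ [t] <+: r := by rw [← hr, List.prefix_append_right_inj]
    _ ↔ t ∈ r.head?.toFinset := by cases r <;> simp [eq_comm]

theorem prefix_of_first_word_general {a b : Fin k} (hab : a ≠ b) (hpre : [a, b] <+: p)
    (hp : ∃ n, 1 ≤ n ∧ p <+: word k m n) :
    p <+: word k m 1 ∧ (gen k m p).card ≤ 1 ∧ (gen k m p = ∅ ↔ p = word k m 1) := by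
  have hunique : ∀ n, 1 ≤ n → p <+: word k m n → n = 1 := fun n hn h =>
    le_antisymm (not_lt.mp fun hlt => hab (eq_of_pair_prefix_word hlt (hpre.trans h))) hn
  obtain ⟨n, hn, hpn⟩ := hp
  have hfirst : p <+: word k m 1 := hunique n hn hpn ▸ hpn
  obtain ⟨r, hr⟩ := hfirst
  have hgen : gen k m p = r.head?.toFinset := gen_eq_toFinset_head? le_rfl hunique hr
  refine ⟨⟨r, hr⟩, ?_, ?_⟩
  · rw [hgen]
    cases r <;> simp
  · rw [hgen, ← hr]
    cases r <;> simp

end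

/-- If a string `p` has `[a_1, a_2]` as a prefix and `p` is a prefix
of some word of `L_m`, then `p` is a prefix of the `n = 1` word `s_m = word k m 1`.
Consequently, for every such `p`, the set of allowed continuations `g_m p` contains
at most one token, and `g_m p = ∅` if and only if `p = s_m`. -/
theorem prefix_of_first_word (k M : ℕ) (hk : 3 ≤ k) (hM : 1 ≤ M)
    (m : Fin k → ℕ) (hm : validParam k M m) (p : List (Fin k))
    (hpre : [(⟨0, by omega⟩ : Fin k), (⟨1, by omega⟩ : Fin k)] <+: p)
    (hp : ∃ n, 1 ≤ n ∧ p <+: word k m n) :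
    p <+: word k m 1 ∧ (gen k m p).card ≤ 1 ∧ (gen k m p = ∅ ↔ p = word k m 1) := by
  exact prefix_of_first_word_general (by simp) hpre hp
end
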